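/- arXiv:1608.02406 — 5 statements merged into one kernel-verified Lean document; each statement's English description precedes it below -/
import Mathlib

section
/- In the manipulation construction, every rational ballot J satisfies at least one of the following four conditions: (1) for some i ∈ [3], J sets every issue u_{i,ℓ} (ℓ ∈ [u]) to true; (2) J sets exactly one of x_i and x'_i to true for each i ∈ [n], sets every z_i to false, sets exactly one of y_j and y'_j to true for each j ∈ [m], sets every t_j to false, sets either all w_{2,ℓ} (ℓ ∈ [n]) to true or all w_{3,ℓ} (ℓ ∈ [n]) to true, and falsifies ψ; (3) J sets exactly one of x_i and x'_i to true for each i, sets every z_i to false, sets every t_j to true, sets, for each j, either neither or both of y_j and y'_j to true, and sets every w_{1,ℓ} (ℓ ∈ [n+1]) to true; (4) J sets every z_i to true, sets, for each i, either neither or both of x_i and x'_i to true, sets every t_j to true, sets, for each j, either neither or both of y_j and y'_j to true, and sets either all w_{2,ℓ} to true or all w_{3,ℓ} to true. -/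
/-!
Constraint-based judgment aggregation: the manipulation construction.
Issues are modelled as an inductive type, ballots as functions `Issue n m → Bool`,
the integrity constraint as a predicate on ballots, and the formula ψ as a Boolean
function of the assignments to X and Y.
-/

namespace Manip

/-- The issues of the manipulation construction. -/
inductive Issue (n m : ℕ) : Type
  | x : Fin n → Issue n m
  | x' : Fin n → Issue n m
  | z : Fin (n / 3) → Issue n m
  | y : Fin m → Issue n m
  | y' : Fin m → Issue n m
  | t : Fin m → Issue n m
  | w1 : Fin (n + 1) → Issue n m
  | w2 : Fin n → Issue n m
  | w3 : Fin n → Issue n m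
  | u : Fin 3 → Fin (10 * n + 10 * m + 10) → Issue n m
  deriving DecidableEq, Fintype

variable {n m : ℕ}

/-- Hamming distance between two ballots: the number of issues on which they differ. -/
def hamming {I : Type*} [Fintype I] (r r' : I → Bool) : ℕ :=
  (Finset.univ.filter (fun i => r i ≠ r' i)).card

def bigA (r : Issue n m → Bool) : Prop := ∀ i, r (.x i) ≠ r (.x' i)
def bigZ (r : Issue n m → Bool) : Prop := ∀ i, r (.z i) = true
def bigB (r : Issue n m → Bool) : Prop := ∀ j, r (.y j) ≠ r (.y' j)
def bigT (r : Issue n m → Bool) : Prop := ∀ j, r (.t j) = true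
def bigW1 (r : Issue n m → Bool) : Prop := ∀ ℓ, r (.w1 ℓ) = true
def bigW2 (r : Issue n m → Bool) : Prop := ∀ ℓ, r (.w2 ℓ) = true
def bigW3 (r : Issue n m → Bool) : Prop := ∀ ℓ, r (.w3 ℓ) = true

/-- The part Γ₀ of the integrity constraint. -/
def gamma0 (psi : (Fin n → Bool) → (Fin m → Bool) → Bool) (r : Issue n m → Bool) : Prop :=
  (bigA r ∨ bigZ r) ∧ (bigA r → ∀ i, r (.z i) = false) ∧
  Xor' (bigB r) (bigT r) ∧ (bigB r → ∀ j, r (.t j) = false) ∧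
  (bigZ r → ∀ i, r (.x i) = false ∧ r (.x' i) = false) ∧
  (bigT r → ∀ j, r (.y j) = false ∧ r (.y' j) = false) ∧
  (bigZ r → bigT r) ∧
  ((bigZ r ∧ bigT r) → (bigW2 r ∨ bigW3 r)) ∧
  ((¬ bigZ r ∧ bigT r) → bigW1 r) ∧
  ((¬ bigZ r ∧ ¬ bigT r) →
    (psi (fun i => r (.x i)) (fun j => r (.y j)) = false ∧ (bigW2 r ∨ bigW3 r)))

/-- A ballot is rational if it satisfies the integrity constraint
`Γ = Γ₀ ∨ ⋁_{i∈[3]} ⋀_{ℓ∈[u]} u_{i,ℓ}`. -/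
def rational (psi : (Fin n → Bool) → (Fin m → Bool) → Bool) (r : Issue n m → Bool) : Prop :=
  gamma0 psi r ∨ ∃ i : Fin 3, ∀ ℓ, r (.u i ℓ) = true

/-- The first individual ballot J₁: true exactly on the w₁- and u₁-issues. -/
def Jone : Issue n m → Bool := fun i => match i with
  | .w1 _ => true
  | .u k _ => k == 0
  | _ => false

/-- The second individual ballot J₂: true exactly on the w₂- and u₂-issues. -/
def Jtwo : Issue n m → Bool := fun i => match i with
  | .w2 _ => true
  | .u k _ => k == 1
  | _ => false

/-- The third individual ballot J₃: true exactly on the x-, x'-, w₃- and u₃-issues. -/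
def Jthree : Issue n m → Bool := fun i => match i with
  | .x _ => true
  | .x' _ => true
  | .w3 _ => true
  | .u k _ => k == 2
  | _ => false

/-- Cumulative Hamming distance of a ballot to a profile of three ballots. -/
def dist3 (r p1 p2 p3 : Issue n m → Bool) : ℕ :=
  hamming r p1 + hamming r p2 + hamming r p3

/-- Cumulative Hamming distance to the profile J⃗ = (J₁, J₂, J₃). -/
def DistP (r : Issue n m → Bool) : ℕ := dist3 r Jone Jtwo Jthree

/-- Membership in the set of Kemeny outcomes of the profile (p1, p2, p3):
a rational ballot minimizing the cumulative Hamming distance among rational ballots. -/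
def kemenyMem (psi : (Fin n → Bool) → (Fin m → Bool) → Bool)
    (p1 p2 p3 r : Issue n m → Bool) : Prop :=
  rational psi r ∧ ∀ r', rational psi r' → dist3 r p1 p2 p3 ≤ dist3 r' p1 p2 p3


end Manip

/-!
`Γ₀` is decided by the truth values of `Z` and `T`. Since it contains `Z → T`, only three of the
four combinations occur: `¬Z ∧ ¬T`, `¬Z ∧ T` and `Z ∧ T`, which give cases (2), (3) and (4). Failure
of `Z` forces `A` through `A ∨ Z`, and failure of `T` forces `B` through `B ⊕ T`; conversely, `Z`
and `T` make both members of every `x`-pair, respectively `y`-pair, false and hence equal.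
-/

namespace Manip

variable {n m : ℕ} {psi : (Fin n → Bool) → (Fin m → Bool) → Bool} {r : Issue n m → Bool}

theorem gamma0.bigT_of_bigZ (h : gamma0 psi r) (hZ : bigZ r) : bigT r := by
  obtain ⟨-, -, -, -, -, -, hZT, -⟩ := h
  exact hZT hZ

theorem gamma0.bigA_of_not_bigZ (h : gamma0 psi r) (hZ : ¬ bigZ r) : bigA r :=
  h.1.resolve_right hZ

theorem gamma0.z_eq_false_of_not_bigZ (h : gamma0 psi r) (hZ : ¬ bigZ r) (i : Fin (n / 3)) :
    r (.z i) = false := by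
  have hA : bigA r := h.bigA_of_not_bigZ hZ
  obtain ⟨-, hAz, -⟩ := h
  exact hAz hA i

theorem gamma0.bigB_of_not_bigT (h : gamma0 psi r) (hT : ¬ bigT r) : bigB r := by
  obtain ⟨-, -, hBT, -⟩ := h
  exact (Xor.or hBT).resolve_right hT

theorem gamma0.t_eq_false_of_not_bigT (h : gamma0 psi r) (hT : ¬ bigT r) (j : Fin m) :
    r (.t j) = false := by
  have hB : bigB r := h.bigB_of_not_bigT hT
  obtain ⟨-, -, -, hBt, -⟩ := h
  exact hBt hB j

theorem gamma0.x_eq_x'_of_bigZ (h : gamma0 psi r) (hZ : bigZ r) (i : Fin n) :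
    r (.x i) = r (.x' i) := by
  obtain ⟨-, -, -, -, hZx, -⟩ := h
  obtain ⟨hx, hx'⟩ := hZx hZ i
  exact hx.trans hx'.symm

theorem gamma0.y_eq_y'_of_bigT (h : gamma0 psi r) (hT : bigT r) (j : Fin m) :
    r (.y j) = r (.y' j) := by
  obtain ⟨-, -, -, -, -, hTy, -⟩ := h
  obtain ⟨hy, hy'⟩ := hTy hT j
  exact hy.trans hy'.symm

theorem gamma0.bigW2_or_bigW3_of_bigZ (h : gamma0 psi r) (hZ : bigZ r) : bigW2 r ∨ bigW3 r := by
  have hT : bigT r := h.bigT_of_bigZ hZ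
  obtain ⟨-, -, -, -, -, -, -, hZTw, -⟩ := h
  exact hZTw ⟨hZ, hT⟩

theorem gamma0.bigW1_of_not_bigZ_of_bigT (h : gamma0 psi r) (hZ : ¬ bigZ r) (hT : bigT r) :
    bigW1 r := by
  obtain ⟨-, -, -, -, -, -, -, -, hTw, -⟩ := h
  exact hTw ⟨hZ, hT⟩

theorem gamma0.psi_eq_false_and_bigW2_or_bigW3_of_not_bigT (h : gamma0 psi r) (hT : ¬ bigT r) :
    psi (fun i => r (.x i)) (fun j => r (.y j)) = false ∧ (bigW2 r ∨ bigW3 r) := by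
  have hZ : ¬ bigZ r := mt h.bigT_of_bigZ hT
  obtain ⟨-, -, -, -, -, -, -, -, -, hpsiw⟩ := h
  exact hpsiw ⟨hZ, hT⟩

end Manip

open Manip in
theorem manip_rational_ballot_cases_general {n m : ℕ} {psi : (Fin n → Bool) → (Fin m → Bool) → Bool}
    {J : Issue n m → Bool} (hJ : rational psi J) :
    (∃ i : Fin 3, ∀ ℓ, J (.u i ℓ) = true) ∨
    (bigA J ∧ (∀ i, J (.z i) = false) ∧ bigB J ∧ (∀ j, J (.t j) = false) ∧
      (bigW2 J ∨ bigW3 J) ∧ psi (fun i => J (.x i)) (fun j => J (.y j)) = false) ∨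
    (bigA J ∧ (∀ i, J (.z i) = false) ∧ bigT J ∧ (∀ j, J (.y j) = J (.y' j)) ∧ bigW1 J) ∨
    (bigZ J ∧ (∀ i, J (.x i) = J (.x' i)) ∧ bigT J ∧ (∀ j, J (.y j) = J (.y' j)) ∧
      (bigW2 J ∨ bigW3 J)) := by
  rcases hJ with hΓ | hu
  · right
    by_cases hZ : bigZ J
    · have hT : bigT J := hΓ.bigT_of_bigZ hZ
      exact .inr (.inr ⟨hZ, hΓ.x_eq_x'_of_bigZ hZ, hT, hΓ.y_eq_y'_of_bigT hT,
        hΓ.bigW2_or_bigW3_of_bigZ hZ⟩)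
    · have hA : bigA J := hΓ.bigA_of_not_bigZ hZ
      have hz : ∀ i, J (.z i) = false := hΓ.z_eq_false_of_not_bigZ hZ
      by_cases hT : bigT J
      · exact .inr (.inl ⟨hA, hz, hT, hΓ.y_eq_y'_of_bigT hT, hΓ.bigW1_of_not_bigZ_of_bigT hZ hT⟩)
      · obtain ⟨hpsi, hW⟩ := hΓ.psi_eq_false_and_bigW2_or_bigW3_of_not_bigT hT
        exact .inl ⟨hA, hz, hΓ.bigB_of_not_bigT hT, hΓ.t_eq_false_of_not_bigT hT, hW, hpsi⟩
  · exact .inl hu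

open Manip in
/-- In the manipulation construction, every rational ballot satisfies
at least one of the four conditions (1)–(4). -/
theorem manip_rational_ballot_cases (n m : ℕ) (hn : 0 < n) (hdvd : 3 ∣ n) (hm : 0 < m)
    (psi : (Fin n → Bool) → (Fin m → Bool) → Bool)
    (J : Issue n m → Bool) (hJ : rational psi J) :
    -- (1) some u-row is entirely true
    (∃ i : Fin 3, ∀ ℓ, J (.u i ℓ) = true) ∨
    -- (2)
    ((∀ i, J (.x i) ≠ J (.x' i)) ∧ (∀ i, J (.z i) = false) ∧
      (∀ j, J (.y j) ≠ J (.y' j)) ∧ (∀ j, J (.t j) = false) ∧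
      ((∀ ℓ, J (.w2 ℓ) = true) ∨ (∀ ℓ, J (.w3 ℓ) = true)) ∧
      psi (fun i => J (.x i)) (fun j => J (.y j)) = false) ∨
    -- (3)
    ((∀ i, J (.x i) ≠ J (.x' i)) ∧ (∀ i, J (.z i) = false) ∧
      (∀ j, J (.t j) = true) ∧ (∀ j, J (.y j) = J (.y' j)) ∧
      (∀ ℓ, J (.w1 ℓ) = true)) ∨
    -- (4)
    ((∀ i, J (.z i) = true) ∧ (∀ i, J (.x i) = J (.x' i)) ∧
      (∀ j, J (.t j) = true) ∧ (∀ j, J (.y j) = J (.y' j)) ∧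
      ((∀ ℓ, J (.w2 ℓ) = true) ∨ (∀ ℓ, J (.w3 ℓ) = true))) :=
  manip_rational_ballot_cases_general hJ
end

section
/- In the manipulation construction, the ballots J*_{old,1} and J*_{old,2} are rational, Dist(J*_{old,1}, J⃗) = Dist(J*_{old,2}, J⃗) = 7n + 3m + 1 + 3u, and every rational ballot r satisfies Dist(r, J⃗) ≥ 7n + 3m + 1 + 3u; consequently J*_{old,1} ∈ Kemeny(J⃗) and J*_{old,2} ∈ Kemeny(J⃗). -/
/-!
Constraint-based judgment aggregation: the manipulation construction.
Issues are modelled as an inductive type, ballots as functions `Issue n m → Bool`,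
the integrity constraint as a predicate on ballots, and the formula ψ as a Boolean
function of the assignments to X and Y.
-/

namespace Manip

variable {n m : ℕ}

/-- The ballot J*_{old,1}: true exactly on the z-, t- and w₂-issues. -/
def JoldOne : Issue n m → Bool := fun i => match i with
  | .z _ => true
  | .t _ => true
  | .w2 _ => true
  | _ => false

/-- The ballot J*_{old,2}: true exactly on the z-, t- and w₃-issues. -/
def JoldTwo : Issue n m → Bool := fun i => match i with
  | .z _ => true
  | .t _ => true
  | .w3 _ => true
  | _ => false

end Manip

/-!
Writing `|r|` for the number of issues accepted by `r`, we have `d(r, s) = |r| + |s| - 2 |r ∧ s|`.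
No voter accepts a `z`-, `y`-, `y'`- or `t`-issue and exactly one voter accepts any other issue, so
summing over the three voters shows that accepting an issue adds 3 or 1 to the distance
`5n + 1 + 3u` of the all-false ballot. Call the total added by a ballot its excess.

A rational ballot has excess at least `n + 3⌊n/3⌋ + 3m`. If some block `u_{i,1}, …, u_{i,u}` is all
true, the excess is at least `u`, which is larger. Otherwise the ballot satisfies `Γ₀`:
* with `Z`, and hence `T`, it pays `3⌊n/3⌋ + 3m`, and `n` for `w₂` or `w₃`;
* with `T` but not `Z`, it pays `n` for `A`, `3m` for `T` and `n + 1` for `w₁`;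
* with neither, it pays `n` for `A`, `3m` for `B`, and `n` for `w₂` or `w₃`.

The two old ballots attain the bound of the first case.
-/

namespace Manip

section BooleanFamilies

variable {ι : Type*} [Fintype ι]

/-- The number of indices at which a Boolean family is true; for a ballot, the number of accepted
issues. -/
def trues (f : ι → Bool) : ℕ := ∑ i, (f i).toNat

@[simp]
lemma trues_true : trues (fun _ : ι => true) = Fintype.card ι := by
  simp [trues]

@[simp]
lemma trues_false : trues (fun _ : ι => false) = 0 := by
  simp [trues]

lemma trues_of_forall_eq_true {f : ι → Bool} (h : ∀ i, f i = true) :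
    trues f = Fintype.card ι := by
  rw [funext h, trues_true]

lemma trues_add_trues_of_forall_ne {f g : ι → Bool} (h : ∀ i, f i ≠ g i) :
    trues f + trues g = Fintype.card ι := by
  have toNat_add_toNat (i : ι) : (f i).toNat + (g i).toNat = 1 := by
    rw [Bool.eq_not_of_ne (h i)]
    cases g i <;> rfl
  simp [trues, ← Finset.sum_add_distrib, toNat_add_toNat]

lemma hamming_add_two_mul_trues_and (r s : ι → Bool) :
    hamming r s + 2 * trues (fun i => r i && s i) = trues r + trues s := by
  simp only [hamming, trues, Finset.card_filter, Finset.mul_sum, ← Finset.sum_add_distrib]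
  refine Finset.sum_congr rfl fun i _ => ?_
  cases r i <;> cases s i <;> rfl

end BooleanFamilies

variable {n m : ℕ}

lemma sum_issue {M : Type*} [AddCommMonoid M] (f : Issue n m → M) :
    ∑ i, f i = ∑ i, f (.x i) + ∑ i, f (.x' i) + ∑ i, f (.z i) + ∑ j, f (.y j) + ∑ j, f (.y' j) +
      ∑ j, f (.t j) + ∑ l, f (.w1 l) + ∑ l, f (.w2 l) + ∑ l, f (.w3 l) +
      ∑ k, ∑ l, f (.u k l) := by
  -- This equivalence comes with the derived `Fintype` instance.
  rw [← (Issue.proxyTypeEquiv n m).sum_comp f]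
  simp only [Fintype.sum_sum_type, Fintype.sum_sigma, ← add_assoc]
  rfl

lemma trues_issue (r : Issue n m → Bool) :
    trues r = trues (fun i => r (.x i)) + trues (fun i => r (.x' i)) + trues (fun i => r (.z i)) +
      trues (fun j => r (.y j)) + trues (fun j => r (.y' j)) + trues (fun j => r (.t j)) +
      trues (fun l => r (.w1 l)) + trues (fun l => r (.w2 l)) + trues (fun l => r (.w3 l)) +
      ∑ k, trues (fun l => r (.u k l)) :=
  sum_issue fun i => (r i).toNat

section Distance

variable (r : Issue n m → Bool)

lemma hamming_Jone :
    hamming r Jone + 2 * (trues (fun l => r (.w1 l)) + trues (fun l => r (.u 0 l))) =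
      trues r + (n + 1 + (10 * n + 10 * m + 10)) := by
  have trues_and : trues (fun i => r i && Jone i) =
      trues (fun l => r (.w1 l)) + trues (fun l => r (.u 0 l)) := by
    simp [trues_issue, Jone, Fin.sum_univ_three]
  have trues_Jone : trues (Jone : Issue n m → Bool) = n + 1 + (10 * n + 10 * m + 10) := by
    simp [trues_issue, Jone, Fin.sum_univ_three]
  rw [← trues_and, ← trues_Jone, hamming_add_two_mul_trues_and]

lemma hamming_Jtwo :
    hamming r Jtwo + 2 * (trues (fun l => r (.w2 l)) + trues (fun l => r (.u 1 l))) =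
      trues r + (n + (10 * n + 10 * m + 10)) := by
  have trues_and : trues (fun i => r i && Jtwo i) =
      trues (fun l => r (.w2 l)) + trues (fun l => r (.u 1 l)) := by
    simp [trues_issue, Jtwo, Fin.sum_univ_three]
  have trues_Jtwo : trues (Jtwo : Issue n m → Bool) = n + (10 * n + 10 * m + 10) := by
    simp [trues_issue, Jtwo, Fin.sum_univ_three]
  rw [← trues_and, ← trues_Jtwo, hamming_add_two_mul_trues_and]

lemma hamming_Jthree :
    hamming r Jthree + 2 * (trues (fun i => r (.x i)) + trues (fun i => r (.x' i)) +
        trues (fun l => r (.w3 l)) + trues (fun l => r (.u 2 l))) =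
      trues r + (n + n + n + (10 * n + 10 * m + 10)) := by
  have trues_and : trues (fun i => r i && Jthree i) = trues (fun i => r (.x i)) +
      trues (fun i => r (.x' i)) + trues (fun l => r (.w3 l)) + trues (fun l => r (.u 2 l)) := by
    simp [trues_issue, Jthree, Fin.sum_univ_three]
  have trues_Jthree :
      trues (Jthree : Issue n m → Bool) = n + n + n + (10 * n + 10 * m + 10) := by
    simp [trues_issue, Jthree, Fin.sum_univ_three]
  rw [← trues_and, ← trues_Jthree, hamming_add_two_mul_trues_and]

/-- The amount by which the distance of `r` to the profile `(J₁, J₂, J₃)` exceeds that of the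
all-false ballot: 1 for every true issue accepted by one voter and 3 for every true issue accepted
by none. -/
def excess : ℕ :=
  trues (fun i => r (.x i)) + trues (fun i => r (.x' i)) + 3 * trues (fun i => r (.z i)) +
    3 * trues (fun j => r (.y j)) + 3 * trues (fun j => r (.y' j)) +
    3 * trues (fun j => r (.t j)) + trues (fun l => r (.w1 l)) + trues (fun l => r (.w2 l)) +
    trues (fun l => r (.w3 l)) + ∑ k, trues (fun l => r (.u k l))

lemma DistP_eq_add_excess : DistP r = 5 * n + 1 + 3 * (10 * n + 10 * m + 10) + excess r := by
  have h₁ := hamming_Jone r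
  have h₂ := hamming_Jtwo r
  have h₃ := hamming_Jthree r
  rw [trues_issue r, Fin.sum_univ_three] at h₁ h₂ h₃
  rw [DistP, dist3, excess, Fin.sum_univ_three]
  omega

end Distance

section LowerBound

variable {r : Issue n m → Bool}

lemma le_trues_w2_add_trues_w3 (hW : bigW2 r ∨ bigW3 r) :
    n ≤ trues (fun l => r (.w2 l)) + trues (fun l => r (.w3 l)) := by
  rcases hW with hW₂ | hW₃
  · simp [trues_of_forall_eq_true hW₂]
  · simp [trues_of_forall_eq_true hW₃]

lemma le_excess_of_bigZ_bigT (hZ : bigZ r) (hT : bigT r) (hW : bigW2 r ∨ bigW3 r) :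
    n + 3 * (n / 3) + 3 * m ≤ excess r := by
  have hz := trues_of_forall_eq_true hZ
  have ht := trues_of_forall_eq_true hT
  have hw := le_trues_w2_add_trues_w3 hW
  rw [Fintype.card_fin] at hz ht
  rw [excess]
  omega

lemma le_excess_of_bigA_bigT (hA : bigA r) (hT : bigT r) (hW : bigW1 r) :
    2 * n + 1 + 3 * m ≤ excess r := by
  have hx := trues_add_trues_of_forall_ne hA
  have ht := trues_of_forall_eq_true hT
  have hw := trues_of_forall_eq_true hW
  rw [Fintype.card_fin] at hx ht hw
  rw [excess]
  omega

lemma le_excess_of_bigA_bigB (hA : bigA r) (hB : bigB r) (hW : bigW2 r ∨ bigW3 r) :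
    2 * n + 3 * m ≤ excess r := by
  have hx := trues_add_trues_of_forall_ne hA
  have hy := trues_add_trues_of_forall_ne hB
  have hw := le_trues_w2_add_trues_w3 hW
  rw [Fintype.card_fin] at hx hy
  rw [excess]
  omega

lemma le_excess_of_forall_u {k : Fin 3} (hk : ∀ l, r (.u k l) = true) :
    10 * n + 10 * m + 10 ≤ excess r :=
  calc 10 * n + 10 * m + 10
      = trues (fun l => r (.u k l)) := by rw [trues_of_forall_eq_true hk, Fintype.card_fin]
    _ ≤ ∑ k, trues (fun l => r (.u k l)) :=
        Finset.single_le_sum (f := fun k => trues fun l => r (.u k l))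
          (fun _ _ => Nat.zero_le _) (Finset.mem_univ k)
    _ ≤ excess r := Nat.le_add_left _ _

variable {psi : (Fin n → Bool) → (Fin m → Bool) → Bool}

lemma le_excess_of_gamma0 (hr : gamma0 psi r) : n + 3 * (n / 3) + 3 * m ≤ excess r := by
  obtain ⟨hAZ, -, hBT, -, -, -, hZT, hW_of_ZT, hW_of_T, hW_of_B⟩ := hr
  by_cases hZ : bigZ r
  · exact le_excess_of_bigZ_bigT hZ (hZT hZ) (hW_of_ZT ⟨hZ, hZT hZ⟩)
  have hA : bigA r := hAZ.resolve_right hZ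
  by_cases hT : bigT r
  · have := le_excess_of_bigA_bigT hA hT (hW_of_T ⟨hZ, hT⟩)
    omega
  · have hB : bigB r := (Xor.or hBT).resolve_right hT
    have := le_excess_of_bigA_bigB hA hB (hW_of_B ⟨hZ, hT⟩).2
    omega

lemma le_excess_of_rational (hr : rational psi r) : n + 3 * (n / 3) + 3 * m ≤ excess r := by
  rcases hr with hΓ₀ | ⟨k, hk⟩
  · exact le_excess_of_gamma0 hΓ₀
  · have := le_excess_of_forall_u hk
    omega

end LowerBound

section OldBallots

lemma gamma0_of_bigZ_bigT (psi : (Fin n → Bool) → (Fin m → Bool) → Bool) (hm : 0 < m)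
    {r : Issue n m → Bool} (hZ : bigZ r) (hT : bigT r) (hW : bigW2 r ∨ bigW3 r)
    (hx : ∀ i, r (.x i) = false ∧ r (.x' i) = false)
    (hy : ∀ j, r (.y j) = false ∧ r (.y' j) = false) : gamma0 psi r := by
  have hA (i : Fin n) : ¬ bigA r := fun h => h i ((hx i).1.trans (hx i).2.symm)
  have hB : ¬ bigB r := fun h => h ⟨0, hm⟩ ((hy _).1.trans (hy _).2.symm)
  exact ⟨.inr hZ, fun h i => absurd h (hA (i.castLE (Nat.div_le_self n 3))), .inr ⟨hT, hB⟩,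
    fun h => absurd h hB, fun _ => hx, fun _ => hy, fun _ => hT, fun _ => hW,
    fun h => absurd hZ h.1, fun h => absurd hZ h.1⟩

lemma rational_JoldOne (psi : (Fin n → Bool) → (Fin m → Bool) → Bool) (hm : 0 < m) :
    rational psi JoldOne :=
  .inl <| gamma0_of_bigZ_bigT psi hm (fun _ => rfl) (fun _ => rfl) (.inl fun _ => rfl)
    (fun _ => ⟨rfl, rfl⟩) (fun _ => ⟨rfl, rfl⟩)

lemma rational_JoldTwo (psi : (Fin n → Bool) → (Fin m → Bool) → Bool) (hm : 0 < m) :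
    rational psi JoldTwo :=
  .inl <| gamma0_of_bigZ_bigT psi hm (fun _ => rfl) (fun _ => rfl) (.inr fun _ => rfl)
    (fun _ => ⟨rfl, rfl⟩) (fun _ => ⟨rfl, rfl⟩)

lemma excess_JoldOne : excess (JoldOne : Issue n m → Bool) = n + 3 * (n / 3) + 3 * m := by
  simp only [excess, JoldOne, trues_true, trues_false, Fintype.card_fin, Finset.sum_const_zero]
  omega

lemma excess_JoldTwo : excess (JoldTwo : Issue n m → Bool) = n + 3 * (n / 3) + 3 * m := by
  simp only [excess, JoldTwo, trues_true, trues_false, Fintype.card_fin, Finset.sum_const_zero]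
  omega

end OldBallots

lemma kemenyMem_of_excess_eq {psi : (Fin n → Bool) → (Fin m → Bool) → Bool}
    {r : Issue n m → Bool} (hr : rational psi r) (h : excess r = n + 3 * (n / 3) + 3 * m) :
    kemenyMem psi Jone Jtwo Jthree r := by
  refine ⟨hr, fun s hs => ?_⟩
  change DistP r ≤ DistP s
  rw [DistP_eq_add_excess, DistP_eq_add_excess, h]
  exact Nat.add_le_add_left (le_excess_of_rational hs) _

end Manip

open Manip in
theorem manip_old_winners_general (n m : ℕ) (hm : 0 < m)
    (psi : (Fin n → Bool) → (Fin m → Bool) → Bool) :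
    rational psi (JoldOne : Issue n m → Bool) ∧
    rational psi (JoldTwo : Issue n m → Bool) ∧
    DistP (JoldOne : Issue n m → Bool) =
      6 * n + 3 * (n / 3) + 3 * m + 1 + 3 * (10 * n + 10 * m + 10) ∧
    DistP (JoldTwo : Issue n m → Bool) =
      6 * n + 3 * (n / 3) + 3 * m + 1 + 3 * (10 * n + 10 * m + 10) ∧
    (∀ r : Issue n m → Bool, rational psi r →
      6 * n + 3 * (n / 3) + 3 * m + 1 + 3 * (10 * n + 10 * m + 10) ≤ DistP r) ∧
    kemenyMem psi Jone Jtwo Jthree (JoldOne : Issue n m → Bool) ∧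
    kemenyMem psi Jone Jtwo Jthree (JoldTwo : Issue n m → Bool) := by
  refine ⟨rational_JoldOne psi hm, rational_JoldTwo psi hm, ?_, ?_, fun r hr => ?_,
    kemenyMem_of_excess_eq (rational_JoldOne psi hm) excess_JoldOne,
    kemenyMem_of_excess_eq (rational_JoldTwo psi hm) excess_JoldTwo⟩
  · rw [DistP_eq_add_excess, excess_JoldOne]
    ring
  · rw [DistP_eq_add_excess, excess_JoldTwo]
    ring
  · have := le_excess_of_rational hr
    rw [DistP_eq_add_excess]
    omega

open Manip in
/-- J*_{old,1} and J*_{old,2} are rational, have cumulative distance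
7n + 3m + 1 + 3u to the profile J⃗, every rational ballot has distance at least that,
and consequently both are Kemeny outcomes of J⃗. -/
theorem manip_old_winners (n m : ℕ) (hn : 0 < n) (hdvd : 3 ∣ n) (hm : 0 < m)
    (psi : (Fin n → Bool) → (Fin m → Bool) → Bool) :
    rational psi (JoldOne : Issue n m → Bool) ∧
    rational psi (JoldTwo : Issue n m → Bool) ∧
    DistP (JoldOne : Issue n m → Bool) = 7 * n + 3 * m + 1 + 3 * (10 * n + 10 * m + 10) ∧
    DistP (JoldTwo : Issue n m → Bool) = 7 * n + 3 * m + 1 + 3 * (10 * n + 10 * m + 10) ∧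
    (∀ r : Issue n m → Bool, rational psi r →
      7 * n + 3 * m + 1 + 3 * (10 * n + 10 * m + 10) ≤ DistP r) ∧
    kemenyMem psi Jone Jtwo Jthree (JoldOne : Issue n m → Bool) ∧
    kemenyMem psi Jone Jtwo Jthree (JoldTwo : Issue n m → Bool) := by
  have hn_div : 6 * n + 3 * (n / 3) = 7 * n := by omega
  simpa only [hn_div] using manip_old_winners_general n m hm psi
end

section
/- In the manipulation construction, for every α : X → Bool one has d(J*_α, J₁) = n + m + u, and d(J*_{old,1}, J₁) = d(J*_{old,2}, J₁) = n/3 + 2n + m + 1 + u; in particular d(J*_α, J₁) is strictly smaller than the (equal) Hamming distances of J*_{old,1} and J*_{old,2} to the first individual ballot J₁. -/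
/-!
Constraint-based judgment aggregation: the manipulation construction.
Issues are modelled as an inductive type, ballots as functions `Issue n m → Bool`,
the integrity constraint as a predicate on ballots, and the formula ψ as a Boolean
function of the assignments to X and Y.
-/

namespace Manip

variable {n m : ℕ}

/-- The ballot J*_α: x_i ↦ α(x_i), x'_i ↦ ¬α(x_i), all t- and w₁-issues true,
every other issue false. -/
def Jalpha (α : Fin n → Bool) : Issue n m → Bool := fun i => match i with
  | .x i' => α i'
  | .x' i' => !(α i')
  | .t _ => true
  | .w1 _ => true
  | _ => false

end Manip

/-!
The Hamming distance of two ballots is additive over the ten families of issues. On each family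
other than `x` and `x'` the four ballots `Jone`, `JoldOne`, `JoldTwo` and `Jalpha α` are constant
(on `u`, for each value of the first index), so the family contributes all of its issues or none
of them. The families `x` and `x'` have to be taken together: `Jalpha α` is complementary on them,
so it differs from `Jone` on exactly one of `x i`, `x' i` for every `i`, whatever `α` is.
-/

namespace Manip

section Hamming

variable {I J : Type*} [Fintype I] [Fintype J]

theorem hamming_comp_equiv (e : J ≃ I) (r r' : I → Bool) :
    hamming (r ∘ e) (r' ∘ e) = hamming r r' := by
  simp only [hamming, Finset.card_filter, Function.comp_apply]
  exact e.sum_comp fun i ↦ if r i ≠ r' i then 1 else 0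

theorem hamming_sum_type (r r' : I ⊕ J → Bool) :
    hamming r r' = hamming (r ∘ .inl) (r' ∘ .inl) + hamming (r ∘ .inr) (r' ∘ .inr) := by
  simp only [hamming, Finset.card_filter, Fintype.sum_sum_type, Function.comp_apply]

theorem hamming_sigma {K : I → Type*} [∀ i, Fintype (K i)] (r r' : (Σ i, K i) → Bool) :
    hamming r r' = ∑ i, hamming (r ∘ Sigma.mk i) (r' ∘ Sigma.mk i) := by
  simp only [hamming, Finset.card_filter, Fintype.sum_sigma, Function.comp_apply]

theorem hamming_const (a b : Bool) :
    hamming (fun _ : I ↦ a) (fun _ ↦ b) = if a = b then 0 else Fintype.card I := by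
  by_cases h : a = b <;> simp [hamming, h]

theorem hamming_add_hamming_of_forall_ne {r r' : I → Bool} (h : ∀ i, r i ≠ r' i) (s : I → Bool) :
    hamming r s + hamming r' s = Fintype.card I := by
  have ne_iff (i : I) : r' i ≠ s i ↔ ¬ r i ≠ s i :=
    (by decide : ∀ a b c : Bool, a ≠ b → (b ≠ c ↔ ¬ a ≠ c)) _ _ _ (h i)
  simp only [hamming, ne_iff]
  exact Finset.card_filter_add_card_filter_not _

end Hamming

section Distances

variable {n m : ℕ}

theorem hamming_eq_sum_families (r r' : Issue n m → Bool) :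
    hamming r r' =
      hamming (r ∘ .x) (r' ∘ .x) + hamming (r ∘ .x') (r' ∘ .x') +
      hamming (r ∘ .z) (r' ∘ .z) +
      hamming (r ∘ .y) (r' ∘ .y) + hamming (r ∘ .y') (r' ∘ .y') +
      hamming (r ∘ .t) (r' ∘ .t) +
      hamming (r ∘ .w1) (r' ∘ .w1) + hamming (r ∘ .w2) (r' ∘ .w2) +
      hamming (r ∘ .w3) (r' ∘ .w3) +
      ∑ k, hamming (r ∘ .u k) (r' ∘ .u k) := by
  -- `Issue.proxyTypeEquiv` comes from `deriving Fintype`: `Issue n m` as a sum of its families.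
  rw [← hamming_comp_equiv (Issue.proxyTypeEquiv n m)]
  simp only [hamming_sum_type, hamming_sigma, add_assoc]
  rfl

theorem sum_hamming_u_Jone {r : Issue n m → Bool} (hr : ∀ k ℓ, r (.u k ℓ) = false) :
    ∑ k, hamming (r ∘ .u k) (Jone ∘ .u k) = 10 * n + 10 * m + 10 := by
  have hamming_u (k : Fin 3) :
      hamming (r ∘ .u k) (Jone ∘ .u k) = if k = 0 then 10 * n + 10 * m + 10 else 0 := by
    have hk : r ∘ .u k = fun _ ↦ false := funext (hr k)
    rw [hk]
    refine (hamming_const false (k == 0)).trans ?_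
    by_cases h : k = 0 <;> simp [h]
  simp only [hamming_u, Finset.sum_ite_eq', Finset.mem_univ, if_true]

theorem hamming_x_add_hamming_x'_of_bigA {r r' : Issue n m → Bool} (hr : bigA r)
    (hr' : ∀ i, r' (.x' i) = r' (.x i)) :
    hamming (r ∘ .x) (r' ∘ .x) + hamming (r ∘ .x') (r' ∘ .x') = n := by
  have same_target : r' ∘ .x' = r' ∘ .x := funext hr'
  rw [same_target]
  exact (hamming_add_hamming_of_forall_ne hr _).trans (Fintype.card_fin n)

theorem bigA_Jalpha (α : Fin n → Bool) : bigA (Jalpha α : Issue n m → Bool) :=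
  fun i ↦ (Bool.not_ne_self (α i)).symm

theorem hamming_Jalpha_Jone (α : Fin n → Bool) :
    hamming (Jalpha α : Issue n m → Bool) Jone = n + m + (10 * n + 10 * m + 10) := by
  rw [hamming_eq_sum_families, hamming_x_add_hamming_x'_of_bigA (bigA_Jalpha α) fun _ ↦ rfl,
    sum_hamming_u_Jone fun _ _ ↦ rfl]
  simp only [Function.comp_def, Jalpha, Jone, hamming_const, Fintype.card_fin, reduceCtorEq,
    if_true, if_false, add_zero]

theorem hamming_JoldOne_Jone :
    hamming (JoldOne : Issue n m → Bool) Jone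
      = n / 3 + 2 * n + m + 1 + (10 * n + 10 * m + 10) := by
  rw [hamming_eq_sum_families, sum_hamming_u_Jone fun _ _ ↦ rfl]
  simp only [Function.comp_def, JoldOne, Jone, hamming_const, Fintype.card_fin, reduceCtorEq,
    if_true, if_false]
  ring

theorem hamming_JoldTwo_Jone :
    hamming (JoldTwo : Issue n m → Bool) Jone
      = n / 3 + 2 * n + m + 1 + (10 * n + 10 * m + 10) := by
  rw [hamming_eq_sum_families, sum_hamming_u_Jone fun _ _ ↦ rfl]
  simp only [Function.comp_def, JoldTwo, Jone, hamming_const, Fintype.card_fin, reduceCtorEq,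
    if_true, if_false]
  ring

end Distances

end Manip

open Manip in
/-- d(J*_α, J₁) = n + m + u and
d(J*_{old,1}, J₁) = d(J*_{old,2}, J₁) = n/3 + 2n + m + 1 + u;
in particular d(J*_α, J₁) is strictly smaller. -/
theorem manip_distances_to_J1 (n m : ℕ) (hn : 0 < n) (hdvd : 3 ∣ n) (hm : 0 < m)
    (α : Fin n → Bool) :
    hamming (Jalpha α : Issue n m → Bool) Jone = n + m + (10 * n + 10 * m + 10) ∧
    hamming (JoldOne : Issue n m → Bool) Jone
      = n / 3 + 2 * n + m + 1 + (10 * n + 10 * m + 10) ∧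
    hamming (JoldTwo : Issue n m → Bool) Jone
      = n / 3 + 2 * n + m + 1 + (10 * n + 10 * m + 10) ∧
    hamming (Jalpha α : Issue n m → Bool) Jone
      < hamming (JoldOne : Issue n m → Bool) Jone ∧
    hamming (Jalpha α : Issue n m → Bool) Jone
      < hamming (JoldTwo : Issue n m → Bool) Jone := by
  have hα := hamming_Jalpha_Jone (m := m) α
  have h₁ := hamming_JoldOne_Jone (n := n) (m := m)
  have h₂ := hamming_JoldTwo_Jone (n := n) (m := m)
  exact ⟨hα, h₁, h₂, by omega, by omega⟩
end

section
/- In the bribery construction, the ballot J*_{old} is rational and J*_{old} ∈ Kemeny(J⃗); moreover, every Kemeny outcome r* ∈ Kemeny(J⃗) sets every issue b_j (j ∈ [2m+4]) to false, and consequently d(r*, J₀, w) = 2m+4 for every r* ∈ Kemeny(J⃗). -/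
/-!
Constraint-based judgment aggregation: the bribery construction.
Issues are modelled as an inductive type, ballots as functions `Issue n m → Bool`,
the integrity constraint as a predicate on ballots, and the formula ψ as a Boolean
function of the assignments to X and Y.
-/

namespace Brib

/-- The issues of the bribery construction. -/
inductive Issue (n m : ℕ) : Type
  | x : Fin n → Issue n m
  | x' : Fin n → Issue n m
  | z : Fin n → Issue n m
  | y : Fin m → Issue n m
  | y' : Fin m → Issue n m
  | t : Fin m → Issue n m
  | u : Fin 3 → Fin (10 * n + 10 * m + 10) → Issue n m
  | a : Issue n m
  | b : Fin (2 * m + 4) → Issue n m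
  deriving DecidableEq, Fintype

variable {n m : ℕ}

/-- Hamming distance between two ballots: the number of issues on which they differ. -/
def hamming {I : Type*} [Fintype I] (r r' : I → Bool) : ℕ :=
  (Finset.univ.filter (fun i => r i ≠ r' i)).card

/-- Weighted Hamming distance: the sum of the weights of the issues on which the
two ballots differ. -/
def whamming {I : Type*} [Fintype I] (w : I → ℕ) (r r' : I → Bool) : ℕ :=
  ∑ i ∈ Finset.univ.filter (fun i => r i ≠ r' i), w i

def bigA (r : Issue n m → Bool) : Prop := ∀ i, r (.x i) ≠ r (.x' i)
def bigZ (r : Issue n m → Bool) : Prop := ∀ i, r (.z i) = true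
def bigB (r : Issue n m → Bool) : Prop := ∀ j, r (.y j) ≠ r (.y' j)
def bigT (r : Issue n m → Bool) : Prop := ∀ j, r (.t j) = true
def bigC (r : Issue n m → Bool) : Prop := ∀ j, r (.b j) = true

/-- The part Γ₀ of the integrity constraint. -/
def gamma0 (psi : (Fin n → Bool) → (Fin m → Bool) → Bool) (r : Issue n m → Bool) : Prop :=
  (r .a = true ∨ bigC r) ∧ (r .a = true → ∀ j, r (.b j) = false) ∧
  (bigC r → r .a = false) ∧
  (bigA r ∨ bigZ r) ∧ (bigA r → ∀ i, r (.z i) = false) ∧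
  Xor' (bigB r) (bigT r) ∧ (bigB r → ∀ j, r (.t j) = false) ∧
  (bigZ r → ∀ i, r (.x i) = false ∧ r (.x' i) = false) ∧
  (bigT r → ∀ j, r (.y j) = false ∧ r (.y' j) = false) ∧
  (bigZ r → (r .a = true ∧ bigT r)) ∧
  ((bigA r ∧ bigB r) →
    (psi (fun i => r (.x i)) (fun j => r (.y j)) = false ∧ r .a = true)) ∧
  ((bigA r ∧ bigT r) → bigC r)

/-- A ballot is rational if it satisfies the integrity constraint
`Γ = Γ₀ ∨ ⋁_{i∈[3]} ⋀_{ℓ∈[u]} u_{i,ℓ}`. -/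
def rational (psi : (Fin n → Bool) → (Fin m → Bool) → Bool) (r : Issue n m → Bool) : Prop :=
  gamma0 psi r ∨ ∃ i : Fin 3, ∀ ℓ, r (.u i ℓ) = true

/-- The profile J⃗ = (J₁, J₂, J₃): the ballot J_{k+1} sets exactly the issues
u_{k+1,ℓ} to true. -/
def Jp (k : Fin 3) : Issue n m → Bool := fun i => match i with
  | .u k' _ => k' == k
  | _ => false

/-- The briber's desired ballot J₀: true exactly on the b- and u₁-issues. -/
def Jzero : Issue n m → Bool := fun i => match i with
  | .b _ => true
  | .u k _ => k == 0
  | _ => false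

/-- The briber's weight function: weight 1 on each b-issue, weight 0 elsewhere. -/
def wt : Issue n m → ℕ := fun i => match i with
  | .b _ => 1
  | _ => 0

/-- Cumulative Hamming distance of a ballot to a profile of three ballots. -/
def dist3 (r p1 p2 p3 : Issue n m → Bool) : ℕ :=
  hamming r p1 + hamming r p2 + hamming r p3

/-- Membership in the set of Kemeny outcomes of the profile (p1, p2, p3):
a rational ballot minimizing the cumulative Hamming distance among rational ballots. -/
def kemenyMem (psi : (Fin n → Bool) → (Fin m → Bool) → Bool)
    (p1 p2 p3 r : Issue n m → Bool) : Prop :=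
  rational psi r ∧ ∀ r', rational psi r' → dist3 r p1 p2 p3 ≤ dist3 r' p1 p2 p3

/-- The ballot J*_{old}: true exactly on the z-, t- and a-issues. -/
def Jold : Issue n m → Bool := fun i => match i with
  | .z _ => true
  | .t _ => true
  | .a => true
  | _ => false

end Brib

/-!
The three ballots of the profile agree on rejecting every issue outside the `u`-blocks, and exactly
one of them accepts a given `u`-issue. So accepting an issue outside the blocks costs `3`, while a
`u`-issue costs `2` if accepted and `1` if rejected. Accepting a whole block therefore costs
`10n + 10m + 10` more than accepting no `u`-issue, which exceeds the cost `3(n + m + 1)` that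
`J*_old` pays outside the blocks. On the other side, `Γ₀` forces `n` acceptances through `A ∨ Z`,
`m` more through `B ∨ T`, and then either `a`, for the cost of `J*_old` with all `b_j` rejected, or
all of the `2m + 4 > 1` issues `b_j`.
-/

namespace Brib

section Ballots

variable {I : Type*} [Fintype I]

lemma whamming_eq_sum (w : I → ℕ) (r r' : I → Bool) :
    whamming w r r' = ∑ i, w i * (r i ^^ r' i).toNat := by
  rw [whamming, Finset.sum_filter]
  refine Finset.sum_congr rfl fun i _ => ?_
  cases r i <;> cases r' i <;> simp

lemma hamming_eq_sum (r r' : I → Bool) : hamming r r' = ∑ i, (r i ^^ r' i).toNat := by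
  simpa [whamming, hamming] using whamming_eq_sum (fun _ => 1) r r'

lemma card_le_sum_of_one_le {f : I → ℕ} (h : ∀ i, 1 ≤ f i) : Fintype.card I ≤ ∑ i, f i := by
  simpa using Finset.sum_le_sum fun i (_ : i ∈ Finset.univ) => h i

end Ballots

variable {n m : ℕ} {psi : (Fin n → Bool) → (Fin m → Bool) → Bool} {r : Issue n m → Bool}

-- `Issue.proxyTypeEquiv` is generated by `deriving Fintype`.
lemma sum_issue {M : Type*} [AddCommMonoid M] (f : Issue n m → M) :
    ∑ i, f i = ∑ i, (f (.x i) + f (.x' i) + f (.z i)) + ∑ j, (f (.y j) + f (.y' j) + f (.t j))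
      + ∑ k, ∑ l, f (.u k l) + f .a + ∑ j, f (.b j) := by
  simp only [← (Issue.proxyTypeEquiv n m).sum_comp f, Fintype.sum_sum_type, Fintype.sum_sigma,
    Fintype.sum_unique, Finset.sum_add_distrib, ← add_assoc]
  rfl

/-- The number of issues `x_i`, `x'_i`, `z_i` accepted by a ballot. -/
def xzCount (r : Issue n m → Bool) : ℕ :=
  ∑ i, ((r (.x i)).toNat + (r (.x' i)).toNat + (r (.z i)).toNat)

/-- The number of issues `y_j`, `y'_j`, `t_j` accepted by a ballot. -/
def ytCount (r : Issue n m → Bool) : ℕ :=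
  ∑ j, ((r (.y j)).toNat + (r (.y' j)).toNat + (r (.t j)).toNat)

/-- The number of issues `u_{k,l}` accepted by a ballot. -/
def uCount (r : Issue n m → Bool) : ℕ := ∑ k, ∑ l, (r (.u k l)).toNat

/-- The number of issues `b_j` accepted by a ballot. -/
def bCount (r : Issue n m → Bool) : ℕ := ∑ j, (r (.b j)).toNat

lemma one_le_toNat_add_toNat {c d : Bool} (h : c ≠ d) : 1 ≤ c.toNat + d.toNat := by
  revert c d
  decide

lemma le_xzCount (h : bigA r ∨ bigZ r) : n ≤ xzCount r := by
  suffices ∀ i, 1 ≤ (r (.x i)).toNat + (r (.x' i)).toNat + (r (.z i)).toNat by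
    simpa [xzCount] using card_le_sum_of_one_le this
  intro i
  rcases h with hA | hZ
  · exact Nat.le_add_right_of_le (one_le_toNat_add_toNat (hA i))
  · simp [hZ i]

lemma le_ytCount (h : bigB r ∨ bigT r) : m ≤ ytCount r := by
  suffices ∀ j, 1 ≤ (r (.y j)).toNat + (r (.y' j)).toNat + (r (.t j)).toNat by
    simpa [ytCount] using card_le_sum_of_one_le this
  intro j
  rcases h with hB | hT
  · exact Nat.le_add_right_of_le (one_le_toNat_add_toNat (hB j))
  · simp [hT j]

lemma le_uCount_of_block {k : Fin 3} (h : ∀ l, r (.u k l) = true) :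
    10 * n + 10 * m + 10 ≤ uCount r :=
  calc 10 * n + 10 * m + 10 = ∑ l, (r (.u k l)).toNat := by simp [h]
    _ ≤ uCount r := Finset.single_le_sum (f := fun k => ∑ l, (r (.u k l)).toNat)
        (fun _ _ => Nat.zero_le _) (Finset.mem_univ k)

lemma bCount_of_bigC (h : bigC r) : bCount r = 2 * m + 4 := by
  simp [bCount, h _]

/-- The distance `Dist(r, J⃗)` of a ballot to the profile of the construction. -/
def profileDist (r : Issue n m → Bool) : ℕ := dist3 r (Jp 0) (Jp 1) (Jp 2)

lemma profileDist_eq (r : Issue n m → Bool) :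
    profileDist r = 3 * (10 * n + 10 * m + 10) + uCount r
      + 3 * (xzCount r + ytCount r + (r .a).toNat + bCount r) := by
  have cost_of_not_u : ∀ c : Bool,
      (c ^^ false).toNat + (c ^^ false).toNat + (c ^^ false).toNat = 3 * c.toNat := by
    decide
  have cost_of_u : ∀ (c : Bool) (k : Fin 3),
      (c ^^ k == 0).toNat + (c ^^ k == 1).toNat + (c ^^ k == 2).toNat = 1 + c.toNat := by
    decide
  simp only [profileDist, dist3, hamming_eq_sum, ← Finset.sum_add_distrib]
  simp only [sum_issue, Jp, cost_of_not_u, cost_of_u]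
  simp only [xzCount, ytCount, uCount, bCount, Finset.sum_add_distrib, ← Finset.mul_sum,
    Finset.sum_const, Finset.card_univ, Fintype.card_fin, smul_eq_mul]
  ring

lemma profileDist_Jold :
    profileDist (Jold : Issue n m → Bool) = 3 * (10 * n + 10 * m + 10) + 3 * (n + m + 1) := by
  simp [profileDist_eq, xzCount, ytCount, uCount, bCount, Jold]

lemma profileDist_Jold_lt_of_block {k : Fin 3} (h : ∀ l, r (.u k l) = true) :
    profileDist (Jold : Issue n m → Bool) < profileDist r := by
  have := le_uCount_of_block h
  rw [profileDist_Jold, profileDist_eq]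
  lia

lemma le_xzCount_add_ytCount (h : gamma0 psi r) : n + m ≤ xzCount r + ytCount r := by
  obtain ⟨-, -, -, hAZ, -, hBT, -⟩ := h
  exact Nat.add_le_add (le_xzCount hAZ) (le_ytCount (hBT.imp And.left And.left))

lemma profileDist_Jold_lt_of_bigC (h : gamma0 psi r) (hC : bigC r) :
    profileDist (Jold : Issue n m → Bool) < profileDist r := by
  have := le_xzCount_add_ytCount h
  rw [profileDist_Jold, profileDist_eq, bCount_of_bigC hC]
  lia

lemma profileDist_Jold_le_of_a (h : gamma0 psi r) (ha : r .a = true) :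
    profileDist (Jold : Issue n m → Bool) ≤ profileDist r := by
  have := le_xzCount_add_ytCount h
  rw [profileDist_Jold, profileDist_eq, ha, Bool.toNat_true]
  lia

lemma profileDist_Jold_le (h : rational psi r) :
    profileDist (Jold : Issue n m → Bool) ≤ profileDist r := by
  rcases h with h | ⟨k, hk⟩
  · exact h.1.elim (profileDist_Jold_le_of_a h) fun hC => (profileDist_Jold_lt_of_bigC h hC).le
  · exact (profileDist_Jold_lt_of_block hk).le

lemma b_eq_false_of_profileDist_le_Jold (h : rational psi r)
    (hle : profileDist r ≤ profileDist (Jold : Issue n m → Bool)) (j : Fin (2 * m + 4)) :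
    r (.b j) = false := by
  rcases h with h | ⟨k, hk⟩
  · have hC : ¬ bigC r := fun hC => hle.not_gt (profileDist_Jold_lt_of_bigC h hC)
    exact h.2.1 (h.1.resolve_right hC) j
  · exact absurd (profileDist_Jold_lt_of_block hk) hle.not_gt

lemma gamma0_Jold (hn : 0 < n) (hm : 0 < m) (psi : (Fin n → Bool) → (Fin m → Bool) → Bool) :
    gamma0 psi Jold := by
  have hA : ¬ bigA (Jold : Issue n m → Bool) := fun h => h ⟨0, hn⟩ rfl
  have hB : ¬ bigB (Jold : Issue n m → Bool) := fun h => h ⟨0, hm⟩ rfl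
  have hC : ¬ bigC (Jold : Issue n m → Bool) := fun h => Bool.false_ne_true (h 0)
  have hT : bigT (Jold : Issue n m → Bool) := fun _ => rfl
  exact ⟨.inl rfl, fun _ _ => rfl, (absurd · hC), .inr fun _ => rfl, (absurd · hA),
    .inr ⟨hT, hB⟩, (absurd · hB), fun _ _ => ⟨rfl, rfl⟩, fun _ _ => ⟨rfl, rfl⟩,
    fun _ => ⟨rfl, hT⟩, fun h => absurd h.1 hA, fun h => absurd h.1 hA⟩

lemma whamming_wt_Jzero (r : Issue n m → Bool) :
    whamming wt r Jzero = ∑ j, (!r (.b j)).toNat := by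
  simp [whamming_eq_sum, sum_issue, wt, Jzero]

end Brib

open Brib in
/-- J*_{old} is rational and a Kemeny outcome of J⃗; moreover every
Kemeny outcome of J⃗ sets every b-issue to false, and consequently has weighted
Hamming distance 2m+4 to J₀. -/
theorem brib_old_winner (n m : ℕ) (hn : 0 < n) (hm : 0 < m)
    (psi : (Fin n → Bool) → (Fin m → Bool) → Bool) :
    rational psi (Jold : Issue n m → Bool) ∧
    kemenyMem psi (Jp 0) (Jp 1) (Jp 2) (Jold : Issue n m → Bool) ∧
    (∀ r : Issue n m → Bool, kemenyMem psi (Jp 0) (Jp 1) (Jp 2) r →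
      ∀ j, r (.b j) = false) ∧
    (∀ r : Issue n m → Bool, kemenyMem psi (Jp 0) (Jp 1) (Jp 2) r →
      whamming wt r Jzero = 2 * m + 4) := by
  have hJold : rational psi Jold := .inl (gamma0_Jold hn hm psi)
  have hb (r : Issue n m → Bool) (hr : kemenyMem psi (Jp 0) (Jp 1) (Jp 2) r) :
      ∀ j, r (.b j) = false :=
    b_eq_false_of_profileDist_le_Jold hr.1 (hr.2 Jold hJold)
  refine ⟨hJold, ⟨hJold, fun r hr => profileDist_Jold_le hr⟩, hb, fun r hr => ?_⟩
  simp [whamming_wt_Jzero, hb r hr]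
end

section
/- In the bribery construction, for every α : X → Bool the ballot J*_α is rational and Dist(J*_α, (J*_α, J₂, J₃)) = 2n + 6m + 8 + 2u. -/
/-!
Constraint-based judgment aggregation: the bribery construction.
Issues are modelled as an inductive type, ballots as functions `Issue n m → Bool`,
the integrity constraint as a predicate on ballots, and the formula ψ as a Boolean
function of the assignments to X and Y.
-/

namespace Brib

variable {n m : ℕ}

/-- The ballot J*_α: x_i ↦ α(x_i), x'_i ↦ ¬α(x_i), all t- and b-issues true,
every other issue false. -/
def Jalpha (α : Fin n → Bool) : Issue n m → Bool := fun i => match i with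
  | .x i' => α i'
  | .x' i' => !(α i')
  | .t _ => true
  | .b _ => true
  | _ => false

end Brib

/-!
The ballot `J*_α` satisfies `A`, `T` and `C` and rejects `a`, all `z_i`, all `y_j` and all `y'_j`.
As `n, m ≥ 1` it falsifies `Z` and `B`, so every conjunct of `Γ₀` holds whatever `ψ` is.

No issue is accepted by both `J*_α` and `J_k`, so their distance is the total number of issues they
accept. `J*_α` accepts one of `x_i`, `x'_i` for each `i`, all `t_j` and all `b_j`, and `J_k` accepts
the `u_{k,ℓ}`, so `J₂` and `J₃` are each at distance `n + m + (2m + 4) + u` from `J*_α`, which is at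
distance `0` from itself.
-/

namespace Brib

open Finset

section Ballot

variable {I : Type*} [Fintype I]

/-- The set of issues accepted by a ballot; Hamming distances are computed from its cardinality. -/
def accepted (r : I → Bool) : Finset I := {i | r i = true}

@[simp]
lemma mem_accepted {r : I → Bool} {i : I} : i ∈ accepted r ↔ r i = true := by
  simp [accepted]

lemma hamming_self (r : I → Bool) : hamming r r = 0 :=
  hammingDist_self r

lemma hamming_eq_card_symmDiff [DecidableEq I] (r r' : I → Bool) :
    hamming r r' = #(symmDiff (accepted r) (accepted r')) := by
  refine congrArg card (Finset.ext fun i => ?_)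
  cases hr : r i <;> cases hr' : r' i <;> simp [mem_symmDiff, hr, hr']

lemma hamming_of_disjoint {r r' : I → Bool} (h : Disjoint (accepted r) (accepted r')) :
    hamming r r' = #(accepted r) + #(accepted r') := by
  classical
  rw [hamming_eq_card_symmDiff, h.symmDiff_eq_sup, sup_eq_union, card_union_of_disjoint h]

lemma card_accepted_of_range {J : Type*} [Fintype J] {r : I → Bool} {f : J → I}
    (hf : f.Injective) (hr : ∀ i, r i = true ↔ i ∈ Set.range f) :
    #(accepted r) = Fintype.card J := by
  classical
  have h_image : accepted r = univ.image f := by ext i; simp [hr]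
  rw [h_image, card_image_of_injective _ hf, card_univ]

end Ballot

variable {n m : ℕ}

lemma card_accepted_Jp (k : Fin 3) :
    #(accepted (Jp k : Issue n m → Bool)) = 10 * n + 10 * m + 10 := by
  have hf : (Issue.u k : _ → Issue n m).Injective := fun _ _ h => by cases h; rfl
  have h_range (i : Issue n m) : Jp k i = true ↔ i ∈ Set.range (Issue.u k) := by
    cases i <;> simp [Jp, @eq_comm _ k]
  rw [card_accepted_of_range hf h_range, Fintype.card_fin]

/-- An enumeration of the issues accepted by `J*_α`: the one of `x_i`, `x'_i` that agrees with `α`,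
then the `t_j`, then the `b_j`. -/
def jalphaIssue (α : Fin n → Bool) : Fin n ⊕ Fin m ⊕ Fin (2 * m + 4) → Issue n m
  | .inl i => bif α i then .x i else .x' i
  | .inr (.inl j) => .t j
  | .inr (.inr j) => .b j

lemma jalphaIssue_injective (α : Fin n → Bool) :
    (jalphaIssue α : _ → Issue n m).Injective := by
  rintro (i | j | j) (i' | j' | j') h <;> grind [jalphaIssue]

lemma Jalpha_eq_true_iff_mem_range (α : Fin n → Bool) (i : Issue n m) :
    Jalpha α i = true ↔ i ∈ Set.range (jalphaIssue α) := by
  cases i <;> simp [Jalpha, jalphaIssue, Bool.cond_eq_ite, ite_eq_iff]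

lemma card_accepted_Jalpha (α : Fin n → Bool) :
    #(accepted (Jalpha α : Issue n m → Bool)) = n + (m + (2 * m + 4)) := by
  rw [card_accepted_of_range (jalphaIssue_injective α) (Jalpha_eq_true_iff_mem_range α)]
  simp only [Fintype.card_sum, Fintype.card_fin]

lemma disjoint_accepted_Jalpha_Jp (α : Fin n → Bool) (k : Fin 3) :
    Disjoint (accepted (Jalpha α : Issue n m → Bool)) (accepted (Jp k)) := by
  refine disjoint_left.mpr fun i => ?_
  cases i <;> simp [Jalpha, Jp]

lemma hamming_Jalpha_Jp (α : Fin n → Bool) (k : Fin 3) :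
    hamming (Jalpha α : Issue n m → Bool) (Jp k)
      = n + (m + (2 * m + 4)) + (10 * n + 10 * m + 10) := by
  rw [hamming_of_disjoint (disjoint_accepted_Jalpha_Jp α k), card_accepted_Jalpha,
    card_accepted_Jp]

lemma gamma0_Jalpha (hn : 0 < n) (hm : 0 < m)
    (psi : (Fin n → Bool) → (Fin m → Bool) → Bool) (α : Fin n → Bool) :
    gamma0 psi (Jalpha α : Issue n m → Bool) := by
  have hA : bigA (Jalpha α : Issue n m → Bool) := fun i => (Bool.not_ne_self (α i)).symm
  have hZ : ¬ bigZ (Jalpha α : Issue n m → Bool) := fun h => Bool.false_ne_true (h ⟨0, hn⟩)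
  have hB : ¬ bigB (Jalpha α : Issue n m → Bool) := fun h => h ⟨0, hm⟩ rfl
  have hT : bigT (Jalpha α : Issue n m → Bool) := fun _ => rfl
  have hC : bigC (Jalpha α : Issue n m → Bool) := fun _ => rfl
  have ha : (Jalpha α : Issue n m → Bool) .a ≠ true := Bool.false_ne_true
  exact ⟨.inr hC, fun h => absurd h ha, fun _ => rfl, .inl hA, fun _ _ => rfl,
    .inr ⟨hT, hB⟩, fun h => absurd h hB, fun h => absurd h hZ, fun _ _ => ⟨rfl, rfl⟩,
    fun h => absurd h hZ, fun h => absurd h.2 hB, fun _ => hC⟩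

end Brib

open Brib in
/-- for every α : X → Bool, the ballot J*_α is rational and has
cumulative Hamming distance 2n + 6m + 8 + 2u to the bribed profile (J*_α, J₂, J₃). -/
theorem brib_Jalpha_rational_dist (n m : ℕ) (hn : 0 < n) (hm : 0 < m)
    (psi : (Fin n → Bool) → (Fin m → Bool) → Bool) (α : Fin n → Bool) :
    rational psi (Jalpha α : Issue n m → Bool) ∧
    dist3 (Jalpha α : Issue n m → Bool) (Jalpha α) (Jp 1) (Jp 2)
      = 2 * n + 6 * m + 8 + 2 * (10 * n + 10 * m + 10) := by
  refine ⟨.inl (gamma0_Jalpha hn hm psi α), ?_⟩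
  rw [dist3, hamming_self, hamming_Jalpha_Jp, hamming_Jalpha_Jp]
  ring
end
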